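/- arXiv:2209.02990 — 3 statements merged into one kernel-verified Lean document; each statement's English description precedes it below -/
import Mathlib

section
/- Let u and v be distinct elements of a set V, let k ≥ 1 and f ≥ 1 be integers, and let 𝒬 and 𝒫 be finite families of finite subsets of V such that: every Q ∈ 𝒬 contains u and does not contain v, and any two distinct members of 𝒬 intersect exactly in {u}; every P ∈ 𝒫 contains v and does not contain u, has at most k+1 elements, and any two distinct members of 𝒫 intersect exactly in {v}; every Q ∈ 𝒬 intersects at least one member of 𝒫; and |𝒬| ≥ 5·k·f. Then there exist 3f pairs (Q₁,P₁), …, (Q_{3f},P_{3f}) ∈ 𝒬 × 𝒫 such that Q_j ∩ P_j ≠ ∅ for every j ∈ {1,…,3f}, the sets Q₁, …, Q_{3f} are pairwise distinct (hence pairwise intersect only in {u}), and the sets P₁, …, P_{3f} are pairwise distinct (hence pairwise intersect only in {v}). -/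
/-- A set `B` avoiding `u` is met by at most `#(B.erase v)` members of a family of sets that avoid `v`
and pairwise intersect only in `u`. -/
theorem card_le_card_erase_of_sunflower {V : Type*} [DecidableEq V] {u v : V}
    {S : Finset (Finset V)} {B : Finset V} (hv : ∀ A ∈ S, v ∉ A)
    (hS : ∀ A ∈ S, ∀ A' ∈ S, A ≠ A' → A ∩ A' = {u}) (hu : u ∉ B)
    (hmeet : ∀ A ∈ S, (A ∩ B).Nonempty) : S.card ≤ (B.erase v).card := by
  refine Finset.card_le_card_of_forall_subsingleton (fun A x => x ∈ A) ?_ ?_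
  · intro A hA
    obtain ⟨x, hx⟩ := hmeet A hA
    rw [Finset.mem_inter] at hx
    exact ⟨x, Finset.mem_erase.2 ⟨fun h => hv A hA (h ▸ hx.1), hx.2⟩, hx.1⟩
  · rintro x hx A ⟨hA, hxA⟩ A' ⟨hA', hxA'⟩
    by_contra hne
    have hxu : x ∈ A ∩ A' := Finset.mem_inter.2 ⟨hxA, hxA'⟩
    rw [hS A hA A' hA' hne, Finset.mem_singleton] at hxu
    exact hu (hxu ▸ Finset.mem_of_mem_erase hx)

theorem key_structural_lemma
    {V : Type} [DecidableEq V] (u v : V) (huv : u ≠ v)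
    (k f : ℕ) (hk : 1 ≤ k) (hf : 1 ≤ f)
    (Q P : Finset (Finset V))
    (hQmem : ∀ A ∈ Q, u ∈ A ∧ v ∉ A)
    (hQdisj : ∀ A ∈ Q, ∀ B ∈ Q, A ≠ B → A ∩ B = {u})
    (hPmem : ∀ A ∈ P, v ∈ A ∧ u ∉ A ∧ A.card ≤ k + 1)
    (hPdisj : ∀ A ∈ P, ∀ B ∈ P, A ≠ B → A ∩ B = {v})
    (hhit : ∀ A ∈ Q, ∃ B ∈ P, (A ∩ B).Nonempty)
    (hcard : 5 * k * f ≤ Q.card) :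
    ∃ Qs Ps : Fin (3 * f) → Finset V,
      (∀ j, Qs j ∈ Q ∧ Ps j ∈ P ∧ (Qs j ∩ Ps j).Nonempty) ∧
      Function.Injective Qs ∧ Function.Injective Ps := by
  choose! g hgP hg using hhit
  have hfiber : ∀ B ∈ Q.image g, (Q.filter fun A => g A = B).card ≤ k := by
    intro B hB
    obtain ⟨A₀, hA₀, rfl⟩ := Finset.mem_image.1 hB
    obtain ⟨hv, hu, hc⟩ := hPmem _ (hgP A₀ hA₀)
    have hle : (Q.filter fun A => g A = g A₀).card ≤ ((g A₀).erase v).card := by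
      refine card_le_card_erase_of_sunflower (u := u) ?_ ?_ hu ?_
      · exact fun A hA => (hQmem A (Finset.mem_filter.1 hA).1).2
      · exact fun A hA A' hA' =>
          hQdisj A (Finset.mem_filter.1 hA).1 A' (Finset.mem_filter.1 hA').1
      · intro A hA
        obtain ⟨hAQ, hgA⟩ := Finset.mem_filter.1 hA
        exact hgA ▸ hg A hAQ
    rw [Finset.card_erase_of_mem hv] at hle
    omega
  have himage : 3 * f ≤ (Q.image g).card := by
    have hQ : Q.card ≤ k * (Q.image g).card := Finset.card_le_mul_card_image Q k hfiber
    have h5 : k * (5 * f) ≤ k * (Q.image g).card := by linarith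
    have := Nat.le_of_mul_le_mul_left h5 hk
    omega
  obtain ⟨T, hT, hTcard⟩ := Finset.exists_subset_card_eq himage
  let e : Fin (3 * f) ≃ T := (T.equivFinOfCardEq hTcard).symm
  have hpre : ∀ j, ∃ A ∈ Q, g A = e j := fun j => Finset.mem_image.1 (hT (e j).2)
  choose Qs hQs hgQs using hpre
  have hinj : Function.Injective fun j => (e j : Finset V) :=
    Subtype.val_injective.comp e.injective
  refine ⟨Qs, fun j => e j, fun j => ⟨hQs j, ?_, ?_⟩, fun i j hij => hinj ?_, hinj⟩
  · simpa only [hgQs] using hgP _ (hQs j)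
  · simpa only [hgQs] using hg _ (hQs j)
  · simp only [← hgQs, hij]
end

section
/- Let G = (V,E) be a finite simple undirected graph and let T₁, …, T_ℓ be subgraphs of G, where each T_i is a tree with a designated root s_i. Suppose the trees are vertex-independent: for every vertex x ∈ V and all indices i ≠ j such that x belongs to both T_i and T_j, the unique path from s_i to x in T_i and the unique path from s_j to x in T_j share no vertex other than x. Then every edge of G belongs to at most two of the trees T₁, …, T_ℓ. -/
open SimpleGraph

/-- In a connected graph with root `r`, one endpoint of any edge lies on a path from `r` to the
other endpoint. -/
theorem SimpleGraph.Connected.exists_isPath_through_adj {W : Type*} {H : SimpleGraph W}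
    (hH : H.Connected) (r : W) {u v : W} (h : H.Adj u v) :
    (∃ p : H.Walk r v, p.IsPath ∧ u ∈ p.support) ∨
      ∃ p : H.Walk r u, p.IsPath ∧ v ∈ p.support := by
  obtain ⟨p, hp⟩ := hH.exists_isPath r u
  by_cases hv : v ∈ p.support
  · exact .inr ⟨p, hp, hv⟩
  · exact .inl ⟨p.concat h, hp.concat hv h, by simp [Walk.support_concat]⟩

theorem vertex_independent_trees_edge_multiplicity
    {V : Type} [Fintype V] (G : SimpleGraph V) (ℓ : ℕ)
    (T : Fin ℓ → G.Subgraph) (s : Fin ℓ → V)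
    (hroot : ∀ i, s i ∈ (T i).verts)
    (htree : ∀ i, (T i).coe.IsTree)
    (hindep : ∀ i j, i ≠ j →
      ∀ (x : V) (hxi : x ∈ (T i).verts) (hxj : x ∈ (T j).verts),
      ∀ (p : (T i).coe.Walk ⟨s i, hroot i⟩ ⟨x, hxi⟩)
        (q : (T j).coe.Walk ⟨s j, hroot j⟩ ⟨x, hxj⟩),
        p.IsPath → q.IsPath →
        ∀ (a : (T i).verts) (b : (T j).verts),
          a ∈ p.support → b ∈ q.support → (a : V) = (b : V) → (a : V) = x) :
    ∀ e ∈ G.edgeSet, {i : Fin ℓ | e ∈ (T i).edgeSet}.ncard ≤ 2 := by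
  intro e he
  induction e using Sym2.ind with | _ u v =>
  have huv : u ≠ v := G.ne_of_adj he
  let A (x y : V) : Set (Fin ℓ) := {i | ∃ (hx : x ∈ (T i).verts) (hy : y ∈ (T i).verts)
    (p : (T i).coe.Walk ⟨s i, hroot i⟩ ⟨y, hy⟩), p.IsPath ∧ ⟨x, hx⟩ ∈ p.support}
  have hA (x y : V) (hxy : x ≠ y) : (A x y).ncard ≤ 1 := by
    rw [Set.ncard_le_one]
    rintro i ⟨_, hyi, p, hp, hxp⟩ j ⟨_, hyj, q, hq, hxq⟩
    by_contra hij
    exact hxy (hindep i j hij y hyi hyj p q hp hq _ _ hxp hxq rfl)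
  have hsub : {i : Fin ℓ | s(u, v) ∈ (T i).edgeSet} ⊆ A u v ∪ A v u := by
    intro i hi
    have hadj : (T i).Adj u v := hi
    exact ((htree i).connected.exists_isPath_through_adj ⟨s i, hroot i⟩ hadj.coe).imp
      (fun ⟨p, hp, h⟩ => ⟨_, _, p, hp, h⟩) (fun ⟨p, hp, h⟩ => ⟨_, _, p, hp, h⟩)
  calc _ ≤ (A u v ∪ A v u).ncard := Set.ncard_le_ncard hsub
    _ ≤ (A u v).ncard + (A v u).ncard := Set.ncard_union_le _ _
    _ ≤ 2 := Nat.add_le_add (hA u v huv) (hA v u huv.symm)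
end

section
/- There is an absolute constant c > 0 with the following property. Let Δ ≥ 1, β ≥ 1 and ℓ ≥ 1 be integers, let R be a finite set, and let R₁, …, R_ℓ ⊆ R be subsets satisfying |R_i| ≥ c·β·Δ·log(ℓ+2) for every i ∈ {1,…,ℓ}. Then there exists a subset R* ⊆ R such that |R*| ≤ |R|/Δ and |R* ∩ R_i| ≥ β for every i ∈ {1,…,ℓ}. -/
/-- The weight of a set `T` relative to a partial hitting set `S`: it is halved by each hit and
vanishes once `T` has been hit `β` times. -/
noncomputable def hittingWeight {α : Type*} [DecidableEq α] (β : ℕ) (T S : Finset α) : ℝ :=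
  if (S ∩ T).card < β then (1 / 2 : ℝ) ^ (S ∩ T).card else 0

section

variable {α ι : Type*} [DecidableEq α] {β : ℕ}

lemma hittingWeight_nonneg (T S : Finset α) : 0 ≤ hittingWeight β T S := by
  unfold hittingWeight
  split_ifs <;> positivity

lemma hittingWeight_le_one (T S : Finset α) : hittingWeight β T S ≤ 1 := by
  unfold hittingWeight
  split_ifs
  · exact pow_le_one₀ (by norm_num) (by norm_num)
  · norm_num

lemma hittingWeight_insert_of_notMem {T S : Finset α} {x : α} (hx : x ∉ T \ S) :
    hittingWeight β T (insert x S) = hittingWeight β T S := by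
  have : insert x S ∩ T = S ∩ T := by
    ext y
    simp only [Finset.mem_sdiff, Finset.mem_inter, Finset.mem_insert] at *
    grind
  simp only [hittingWeight, this]

lemma hittingWeight_insert_of_mem {T S : Finset α} {x : α} (hx : x ∈ T \ S) :
    hittingWeight β T (insert x S) ≤ hittingWeight β T S / 2 := by
  rw [Finset.mem_sdiff] at hx
  have hcard : (insert x S ∩ T).card = (S ∩ T).card + 1 := by
    rw [Finset.insert_inter_of_mem hx.1, Finset.card_insert_of_notMem]
    simp [hx.2]
  unfold hittingWeight
  rw [hcard]
  split_ifs with h₁ h₂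
  · rw [pow_succ]
    linarith
  · omega
  · positivity
  · norm_num

/-- Averaged over the next element `x ∈ R`, the weight of a large set `T` drops by a constant
factor. -/
lemma sum_hittingWeight_insert_le {R T : Finset α} (hT : T ⊆ R) (hβ : 2 * β ≤ T.card)
    (S : Finset α) :
    ∑ x ∈ R, hittingWeight β T (insert x S) ≤
      ((R.card : ℝ) - T.card / 4) * hittingWeight β T S := by
  have hsub : T \ S ⊆ R := Finset.sdiff_subset.trans hT
  have hsum : ∑ x ∈ R, hittingWeight β T (insert x S) ≤
      ((R.card : ℝ) - (T \ S).card / 2) * hittingWeight β T S := by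
    have hout : ∑ x ∈ R \ (T \ S), hittingWeight β T (insert x S) =
        ((R.card : ℝ) - (T \ S).card) * hittingWeight β T S := by
      rw [Finset.sum_congr rfl fun x hx ↦
        hittingWeight_insert_of_notMem (Finset.mem_sdiff.1 hx).2, Finset.sum_const,
        nsmul_eq_mul, Finset.cast_card_sdiff hsub]
    have hin : ∑ x ∈ T \ S, hittingWeight β T (insert x S) ≤
        ((T \ S).card : ℝ) * (hittingWeight β T S / 2) := by
      rw [← nsmul_eq_mul]
      exact Finset.sum_le_card_nsmul _ _ _ fun x hx ↦ hittingWeight_insert_of_mem hx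
    rw [← Finset.sum_sdiff hsub, hout]
    linarith
  by_cases h : (S ∩ T).card < β
  · have hsplit := Finset.card_sdiff_add_card_inter T S
    rw [Finset.inter_comm] at hsplit
    have hhalf : T.card ≤ 2 * (T \ S).card := by omega
    have hhalf' : (T.card : ℝ) ≤ 2 * (T \ S).card := by exact_mod_cast hhalf
    refine hsum.trans (mul_le_mul_of_nonneg_right ?_ (hittingWeight_nonneg T S))
    linarith
  · simpa [hittingWeight, h] using hsum

/-- The greedy choice of `k` elements makes the total weight decay geometrically. -/
lemma exists_card_le_sum_hittingWeight_le [Fintype ι] {R : Finset α} (hR : R.Nonempty)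
    {T : ι → Finset α} (hT : ∀ i, T i ⊆ R) (hβ : ∀ i, 2 * β ≤ (T i).card) {q : ℝ} (hq : q ≤ 1)
    (hqT : ∀ i, 4 * R.card * q ≤ (T i).card) (k : ℕ) :
    ∃ S ⊆ R, S.card ≤ k ∧
      ∑ i, hittingWeight β (T i) S ≤ Fintype.card ι * (1 - q) ^ k := by
  induction k with
  | zero =>
    refine ⟨∅, by simp, by simp, ?_⟩
    simpa using Finset.sum_le_card_nsmul Finset.univ (fun i ↦ hittingWeight β (T i) ∅) 1
      fun i _ ↦ hittingWeight_le_one _ _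
  | succ k ih =>
    obtain ⟨S, hSR, hSk, hS⟩ := ih
    have havg : ∑ x ∈ R, ∑ i, hittingWeight β (T i) (insert x S) ≤
        ∑ _x ∈ R, (1 - q) * ∑ i, hittingWeight β (T i) S := by
      rw [Finset.sum_comm, Finset.sum_const, nsmul_eq_mul, Finset.mul_sum, Finset.mul_sum]
      refine Finset.sum_le_sum fun i _ ↦ (sum_hittingWeight_insert_le (hT i) (hβ i) S).trans ?_
      rw [← mul_assoc]
      refine mul_le_mul_of_nonneg_right ?_ (hittingWeight_nonneg _ _)
      linarith [hqT i]
    obtain ⟨x, hx, hxle⟩ := Finset.exists_le_of_sum_le hR havg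
    refine ⟨insert x S, Finset.insert_subset hx hSR,
      (Finset.card_insert_le x S).trans (by omega), hxle.trans ?_⟩
    calc (1 - q) * ∑ i, hittingWeight β (T i) S
        ≤ (1 - q) * (Fintype.card ι * (1 - q) ^ k) :=
          mul_le_mul_of_nonneg_left hS (by linarith)
      _ = Fintype.card ι * (1 - q) ^ (k + 1) := by ring

lemma le_card_inter_of_sum_hittingWeight_lt [Fintype ι] {T : ι → Finset α} {S : Finset α}
    (h : ∑ i, hittingWeight β (T i) S < (1 / 2 : ℝ) ^ β) (i : ι) : β ≤ (S ∩ T i).card := by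
  by_contra! hi
  have hle : hittingWeight β (T i) S ≤ ∑ j, hittingWeight β (T j) S :=
    Finset.single_le_sum (f := fun j ↦ hittingWeight β (T j) S)
      (fun j _ ↦ hittingWeight_nonneg _ _) (Finset.mem_univ i)
  have hpow : (1 / 2 : ℝ) ^ β ≤ (1 / 2 : ℝ) ^ (S ∩ T i).card :=
    pow_le_pow_of_le_one (by norm_num) (by norm_num) hi.le
  rw [hittingWeight, if_pos hi] at hle
  linarith

end

lemma mul_one_sub_pow_lt_half_pow {ℓ β k : ℕ} (hβ : 1 ≤ β) {q : ℝ} (hq : q ≤ 1)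
    (hqk : 2 * β * Real.log ((ℓ : ℝ) + 2) ≤ q * k) :
    (ℓ : ℝ) * (1 - q) ^ k < (1 / 2 : ℝ) ^ β := by
  set L := Real.log ((ℓ : ℝ) + 2)
  have hℓ : (0 : ℝ) < (ℓ : ℝ) + 2 := by positivity
  have hexpL : Real.exp L = (ℓ : ℝ) + 2 := Real.exp_log hℓ
  have hL0 : 0 ≤ L := Real.log_nonneg (by linarith [(Nat.cast_nonneg ℓ : (0 : ℝ) ≤ ℓ)])
  have hβ' : (1 : ℝ) ≤ β := by exact_mod_cast hβ
  have hpow : (1 - q) ^ k ≤ Real.exp (-(2 * β * L)) :=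
    calc (1 - q) ^ k ≤ Real.exp (-q) ^ k :=
          pow_le_pow_left₀ (by linarith) (Real.one_sub_le_exp_neg q) k
      _ = Real.exp (-(q * k)) := by rw [← Real.exp_nat_mul]; ring_nf
      _ ≤ Real.exp (-(2 * β * L)) := Real.exp_le_exp.2 (by linarith)
  calc (ℓ : ℝ) * (1 - q) ^ k ≤ ℓ * Real.exp (-(2 * β * L)) :=
        mul_le_mul_of_nonneg_left hpow (Nat.cast_nonneg ℓ)
    _ < Real.exp L * Real.exp (-(2 * β * L)) :=
        mul_lt_mul_of_pos_right (by rw [hexpL]; linarith) (Real.exp_pos _)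
    _ = Real.exp (L - 2 * β * L) := by rw [← Real.exp_add]; ring_nf
    _ ≤ Real.exp (β * -L) := Real.exp_le_exp.2 (by nlinarith)
    _ = (1 / ((ℓ : ℝ) + 2)) ^ β := by rw [Real.exp_nat_mul, Real.exp_neg, hexpL, one_div]
    _ ≤ (1 / 2 : ℝ) ^ β := by
        gcongr
        linarith [(Nat.cast_nonneg ℓ : (0 : ℝ) ≤ ℓ)]

theorem deterministic_hitting_sets_with_multiplicity :
    ∃ c : ℝ, 0 < c ∧
      ∀ (α : Type) [DecidableEq α] (Δ β ℓ : ℕ),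
        1 ≤ Δ → 1 ≤ β → 1 ≤ ℓ →
        ∀ (R : Finset α) (Ri : Fin ℓ → Finset α),
          (∀ i, Ri i ⊆ R) →
          (∀ i, c * (β : ℝ) * (Δ : ℝ) * Real.log ((ℓ : ℝ) + 2) ≤ ((Ri i).card : ℝ)) →
          ∃ Rstar : Finset α, Rstar ⊆ R ∧
            ((Rstar.card : ℝ) ≤ (R.card : ℝ) / (Δ : ℝ)) ∧
            ∀ i, β ≤ (Rstar ∩ Ri i).card := by
  refine ⟨16, by norm_num, fun α _ Δ β ℓ hΔ hβ hℓ R T hT hcard ↦ ?_⟩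
  set L := Real.log ((ℓ : ℝ) + 2)
  have hLhalf : 1 / 2 ≤ L := by
    have : Real.log 2 ≤ L :=
      Real.log_le_log (by norm_num) (by linarith [(Nat.cast_nonneg ℓ : (0 : ℝ) ≤ ℓ)])
    linarith [Real.log_two_gt_d9]
  have hlower : ∀ i, 2 * (β * Δ) ≤ (T i).card := fun i ↦ by
    have hβΔ : (0 : ℝ) ≤ β * Δ := by positivity
    have : (2 : ℝ) * (β * Δ) ≤ (T i).card := by nlinarith [hcard i]
    exact_mod_cast this
  have hTβ : ∀ i, 2 * β ≤ (T i).card := fun i ↦ by nlinarith [hlower i]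
  have hTR : (T ⟨0, hℓ⟩).card ≤ R.card := Finset.card_le_card (hT _)
  have hΔR : Δ ≤ R.card := by nlinarith [hlower ⟨0, hℓ⟩]
  have hR : 0 < R.card := by omega
  have hR' : (0 : ℝ) < R.card := by exact_mod_cast hR
  have hTR' : ((T ⟨0, hℓ⟩).card : ℝ) ≤ R.card := by exact_mod_cast hTR
  set q : ℝ := 16 * β * Δ * L / (4 * R.card) with hq
  have hqR : 4 * R.card * q = 16 * β * Δ * L := by
    rw [hq]
    field_simp
  have hq1 : q ≤ 1 := by
    rw [hq, div_le_one (by positivity)]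
    linarith [hcard ⟨0, hℓ⟩]
  set k := R.card / Δ
  have hRk : R.card ≤ 2 * (Δ * k) := by
    have h₁ : Δ * k + R.card % Δ = R.card := Nat.div_add_mod _ _
    have h₂ : R.card % Δ < Δ := Nat.mod_lt _ hΔ
    have h₃ : 1 ≤ k := Nat.div_pos hΔR hΔ
    nlinarith
  have hRk' : (R.card : ℝ) ≤ 2 * (Δ * k) := by exact_mod_cast hRk
  have hqk : 2 * β * L ≤ q * k := by
    rw [hq, div_mul_eq_mul_div, le_div_iff₀ (by positivity)]
    have hβL : 0 ≤ 8 * (β * L) := by positivity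
    nlinarith [mul_le_mul_of_nonneg_left hRk' hβL]
  obtain ⟨S, hSR, hSk, hS⟩ := exists_card_le_sum_hittingWeight_le (Finset.card_pos.1 hR) hT hTβ
    hq1 (fun i ↦ hqR.le.trans (hcard i)) k
  rw [Fintype.card_fin] at hS
  refine ⟨S, hSR, ?_, le_card_inter_of_sum_hittingWeight_lt
    (hS.trans_lt (mul_one_sub_pow_lt_half_pow hβ hq1 hqk))⟩
  exact (Nat.cast_le.2 hSk).trans Nat.cast_div_le
end
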